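/- Let F₂ be the free group on two generators a and b, and let κ > 0. There exists a family (ρ_t)_{t ∈ [0,1]} of group homomorphisms ρ_t : F₂ → SL(2,ℝ) with the following properties. (1) Continuity in t: for every γ ∈ F₂, the map t ↦ ρ_t(γ) is continuous on [0,1]. (2) μ(ρ₀(γ)) ≥ κ·ℓ_a(γ) for all γ ∈ F₂. (3) For every irrational t ∈ [0,1]: the image ρ_t(F₂) is dense in SL(2,ℝ); the element ρ_t(a) is hyperbolic, i.e. |trace(ρ_t(a))| > 2; and the element ρ_t(b) is elliptic, i.e. |trace(ρ_t(b))| < 2. -/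

import Mathlib

open Matrix

/-- The operator norm of a `2 × 2` real matrix acting on Euclidean `ℝ²`. -/
noncomputable def opNorm2 (M : Matrix (Fin 2) (Fin 2) ℝ) : ℝ :=
  ‖LinearMap.toContinuousLinearMap (Matrix.toEuclideanLin M)‖

/-- The Cartan projection `μ(g) = 2 log ‖g‖` of `SL(2,ℝ)`, identifying the closed positive
Weyl chamber with `ℝ≥0`. -/
noncomputable def mu2 (g : Matrix.SpecialLinearGroup (Fin 2) ℝ) : ℝ :=
  2 * Real.log (opNorm2 (g : Matrix (Fin 2) (Fin 2) ℝ))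

/-- The number of letters equal to `a` or `a⁻¹` in the reduced word of an element of the
free group on the two generators `a = FreeGroup.of 0` and `b = FreeGroup.of 1`. -/
def lenA (γ : FreeGroup (Fin 2)) : ℕ :=
  (FreeGroup.toWord γ).countP fun p => decide (p.1 = 0)


noncomputable def kRot (φ : ℝ) : Matrix.SpecialLinearGroup (Fin 2) ℝ :=
  ⟨!![Real.cos φ, -Real.sin φ; Real.sin φ, Real.cos φ], by
    rw [Matrix.det_fin_two_of]; nlinarith [Real.sin_sq_add_cos_sq φ]⟩

lemma kRot_coe (φ : ℝ) : (kRot φ : Matrix (Fin 2) (Fin 2) ℝ) =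
    !![Real.cos φ, -Real.sin φ; Real.sin φ, Real.cos φ] := rfl

lemma kRot_add (φ ψ : ℝ) : kRot (φ + ψ) = kRot φ * kRot ψ := by
  apply Subtype.ext
  ext i j
  fin_cases i <;> fin_cases j <;>
    simp [kRot_coe, Matrix.mul_apply, Fin.sum_univ_two, Real.cos_add, Real.sin_add] <;> ring

lemma kRot_zero : kRot 0 = 1 := by
  apply Subtype.ext
  ext i j
  fin_cases i <;> fin_cases j <;> simp [kRot]

lemma kRot_neg (φ : ℝ) : kRot (-φ) = (kRot φ)⁻¹ := by
  apply eq_inv_of_mul_eq_one_left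
  rw [← kRot_add]; simp [kRot_zero]

lemma kRot_two_pi : kRot (2 * Real.pi) = 1 := by
  apply Subtype.ext
  ext i j
  fin_cases i <;> fin_cases j <;> simp [kRot]

lemma continuous_kRot : Continuous kRot := by
  apply Continuous.subtype_mk
  refine continuous_matrix fun i j => ?_
  fin_cases i <;> fin_cases j <;> simp <;> fun_prop

/-- Squared Frobenius norm. -/
def frob (g : Matrix.SpecialLinearGroup (Fin 2) ℝ) : ℝ :=
  g.1 0 0 ^ 2 + g.1 0 1 ^ 2 + g.1 1 0 ^ 2 + g.1 1 1 ^ 2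

lemma sl_det (g : Matrix.SpecialLinearGroup (Fin 2) ℝ) :
    g.1 0 0 * g.1 1 1 - g.1 0 1 * g.1 1 0 = 1 := by
  rw [← Matrix.det_fin_two]; exact g.2

lemma frob_ge (g : Matrix.SpecialLinearGroup (Fin 2) ℝ) : 2 ≤ frob g := by
  have := sl_det g
  unfold frob
  nlinarith [sq_nonneg (g.1 0 0 - g.1 1 1), sq_nonneg (g.1 0 1 + g.1 1 0)]

lemma frob_gt (g : Matrix.SpecialLinearGroup (Fin 2) ℝ) (h : 2 < |Matrix.trace g.1|) :
    2 < frob g := by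
  have h1 : 4 < (g.1 0 0 + g.1 1 1) ^ 2 := by
    rw [← Matrix.trace_fin_two, ← sq_abs]; nlinarith
  unfold frob
  nlinarith [sq_nonneg (g.1 0 0 - g.1 1 1), sq_nonneg (g.1 0 1 - g.1 1 0), sl_det g,
    sq_nonneg (g.1 0 1 + g.1 1 0)]

lemma rot_exists (p q p' q' : ℝ) (h : p ^ 2 + q ^ 2 = p' ^ 2 + q' ^ 2) :
    ∃ u : ℝ, p' = p * Real.cos u - q * Real.sin u ∧ q' = p * Real.sin u + q * Real.cos u := by
  set z : ℂ := ⟨p, q⟩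
  set w : ℂ := ⟨p', q'⟩
  have hn : ‖z‖ = ‖w‖ := by
    rw [← sq_eq_sq₀ (norm_nonneg _) (norm_nonneg _), Complex.sq_norm, Complex.sq_norm]
    simp only [Complex.normSq_apply, z, w]
    linarith
  refine ⟨Complex.arg w - Complex.arg z, ?_⟩
  have h1 : p = ‖z‖ * Real.cos z.arg := (Complex.norm_mul_cos_arg z).symm
  have h2 : q = ‖z‖ * Real.sin z.arg := (Complex.norm_mul_sin_arg z).symm
  have h3 : p' = ‖z‖ * Real.cos w.arg := by rw [hn]; exact (Complex.norm_mul_cos_arg w).symm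
  have h4 : q' = ‖z‖ * Real.sin w.arg := by rw [hn]; exact (Complex.norm_mul_sin_arg w).symm
  obtain ⟨u, hu⟩ : ∃ u, u = w.arg - z.arg := ⟨_, rfl⟩
  have e : w.arg = z.arg + u := by rw [hu]; ring
  rw [← hu]
  rw [e, Real.cos_add] at h3
  rw [e, Real.sin_add] at h4
  constructor
  · linear_combination h3 - Real.cos u * h1 + Real.sin u * h2
  · linear_combination h4 - Real.sin u * h1 - Real.cos u * h2

lemma exists_KK (g g' : Matrix.SpecialLinearGroup (Fin 2) ℝ) (h : frob g = frob g') :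
    ∃ φ ψ : ℝ, g' = kRot φ * g * kRot ψ := by
  have d := sl_det g
  have d' := sl_det g'
  unfold frob at h
  obtain ⟨u, hu1, hu2⟩ := rot_exists (g.1 0 0 + g.1 1 1) (g.1 1 0 - g.1 0 1)
    (g'.1 0 0 + g'.1 1 1) (g'.1 1 0 - g'.1 0 1) (by linear_combination h + 2 * d - 2 * d')
  obtain ⟨v, hv1, hv2⟩ := rot_exists (g.1 0 0 - g.1 1 1) (g.1 1 0 + g.1 0 1)
    (g'.1 0 0 - g'.1 1 1) (g'.1 1 0 + g'.1 0 1) (by linear_combination h - 2 * d + 2 * d')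
  refine ⟨(u + v) / 2, (u - v) / 2, ?_⟩
  obtain ⟨φ, hφ⟩ : ∃ φ, φ = (u + v) / 2 := ⟨_, rfl⟩
  obtain ⟨ψ, hψ⟩ : ∃ ψ, ψ = (u - v) / 2 := ⟨_, rfl⟩
  rw [← hφ, ← hψ]
  have eu : u = φ + ψ := by rw [hφ, hψ]; ring
  have ev : v = φ - ψ := by rw [hφ, hψ]; ring
  rw [eu, Real.cos_add, Real.sin_add] at hu1 hu2
  rw [ev, Real.cos_sub, Real.sin_sub] at hv1 hv2
  apply Subtype.ext
  ext i j
  fin_cases i <;> fin_cases j <;>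
    simp [kRot_coe, Matrix.mul_apply, Fin.sum_univ_two, Matrix.vecMul, dotProduct]
  · linear_combination (hu1 + hv1) / 2
  · linear_combination (hv2 - hu2) / 2
  · linear_combination (hv2 + hu2) / 2
  · linear_combination (hu1 - hv1) / 2

lemma frob_ivt (H : Subgroup (Matrix.SpecialLinearGroup (Fin 2) ℝ)) (hk : ∀ φ, kRot φ ∈ H)
    (g : Matrix.SpecialLinearGroup (Fin 2) ℝ) (hg : g ∈ H) (x : ℝ) (h2 : 2 ≤ x)
    (hx : x ≤ frob g ^ 2 - 2) : ∃ h ∈ H, frob h = x := by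
  have hc : Continuous (fun φ => frob (g * kRot φ * g⁻¹)) := by
    have : Continuous (fun φ => g * kRot φ * g⁻¹) :=
      (continuous_const.mul continuous_kRot).mul continuous_const
    have h' : Continuous (fun φ => (g * kRot φ * g⁻¹).1) := continuous_subtype_val.comp this
    unfold frob
    have := fun i j => h'.matrix_elem i j
    exact (((((this 0 0).pow 2).add ((this 0 1).pow 2)).add ((this 1 0).pow 2)).add
      ((this 1 1).pow 2))
  have h0 : frob (g * kRot 0 * g⁻¹) = 2 := by
    rw [kRot_zero]; simp [frob]; norm_num
  have h1 : frob (g * kRot (Real.pi / 2) * g⁻¹) = frob g ^ 2 - 2 := by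
    have d := sl_det g
    rw [show g * kRot (Real.pi / 2) * g⁻¹ = g * (kRot (Real.pi / 2) * g⁻¹) from mul_assoc _ _ _]
    simp [frob, kRot_coe, Matrix.mul_apply, Fin.sum_univ_two, Matrix.SpecialLinearGroup.coe_inv,
      Matrix.adjugate_fin_two]
    generalize g.1 0 0 = p at *
    generalize g.1 0 1 = q at *
    generalize g.1 1 0 = r at *
    generalize g.1 1 1 = s at *
    linear_combination (-2 * (p * s - q * r + 1)) * d
  have := intermediate_value_Icc (by positivity : (0:ℝ) ≤ Real.pi / 2) hc.continuousOn
  rw [h0, h1] at this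
  obtain ⟨φ, -, hφ⟩ := this ⟨h2, hx⟩
  exact ⟨_, H.mul_mem (H.mul_mem hg (hk φ)) (H.inv_mem hg), hφ⟩

lemma subgroup_top (H : Subgroup (Matrix.SpecialLinearGroup (Fin 2) ℝ)) (hk : ∀ φ, kRot φ ∈ H)
    (g : Matrix.SpecialLinearGroup (Fin 2) ℝ) (hg : g ∈ H) (h2 : 2 < frob g) (x) : x ∈ H := by
  have key : ∀ n : ℕ, ∃ h ∈ H, 2 + n * (frob g - 2) < frob h := by
    intro n
    induction n with
    | zero => exact ⟨g, hg, by simpa using h2⟩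
    | succ n ih =>
      obtain ⟨h, hh, hf⟩ := ih
      have hf2 := frob_ge h
      rcases n with _ | n
      · obtain ⟨h', hh', e⟩ := frob_ivt H hk g hg (frob g ^ 2 - 2) (by nlinarith) le_rfl
        refine ⟨h', hh', ?_⟩
        rw [e]; push_cast; nlinarith
      · obtain ⟨h', hh', e⟩ := frob_ivt H hk h hh (frob h ^ 2 - 2) (by nlinarith) le_rfl
        refine ⟨h', hh', ?_⟩
        rw [e]; push_cast at *
        have : 0 ≤ (n:ℝ) * (frob g - 2) := mul_nonneg (by positivity) (by linarith)
        nlinarith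
  obtain ⟨n, hn⟩ := exists_nat_gt ((frob x - 2) / (frob g - 2))
  rw [div_lt_iff₀ (by linarith)] at hn
  obtain ⟨h, hh, hf⟩ := key n
  have := frob_ge h
  obtain ⟨h', hh', e⟩ := frob_ivt H hk h hh (frob x) (frob_ge x) (by nlinarith)
  obtain ⟨φ, ψ, rfl⟩ := exists_KK h' x e
  exact H.mul_mem (H.mul_mem (hk φ) hh') (hk ψ)

lemma dense_of (H : Subgroup (Matrix.SpecialLinearGroup (Fin 2) ℝ))
    (hH : IsClosed (H : Set (Matrix.SpecialLinearGroup (Fin 2) ℝ)))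
    (D a : Matrix.SpecialLinearGroup (Fin 2) ℝ) (ha : a ∈ H) (htr : 2 < |Matrix.trace a.1|)
    (t : ℝ) (ht : Irrational t) (hb : D * kRot (Real.pi * t) * D⁻¹ ∈ H) (x) : x ∈ H := by
  let A : AddSubgroup ℝ :=
    { carrier := {φ | D * kRot φ * D⁻¹ ∈ H}
      zero_mem' := by simp [kRot_zero, H.one_mem]
      add_mem' := by
        intro φ ψ h1 h2
        have := H.mul_mem h1 h2
        simp only [Set.mem_ofPred_eq, kRot_add]
        convert this using 1
        group
      neg_mem' := by
        intro φ h1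
        have := H.inv_mem h1
        simp only [Set.mem_ofPred_eq, kRot_neg]
        convert this using 1
        group }
  have hAc : IsClosed (A : Set ℝ) := by
    have : Continuous (fun φ => D * kRot φ * D⁻¹) :=
      (continuous_const.mul continuous_kRot).mul continuous_const
    exact hH.preimage this
  have hd : Dense (AddSubgroup.closure {Real.pi * t, 2 * Real.pi} : Set ℝ) := by
    rw [dense_addSubgroupClosure_pair_iff]
    have : Real.pi * t / (2 * Real.pi) = t / (2:ℕ) := by
      have := Real.pi_ne_zero
      field_simp; norm_num
    rw [this]
    exact ht.div_natCast (by norm_num)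
  have hle : AddSubgroup.closure {Real.pi * t, 2 * Real.pi} ≤ A := by
    rw [AddSubgroup.closure_le]
    rintro y (rfl | rfl)
    · exact hb
    · change D * kRot _ * D⁻¹ ∈ H
      simp [kRot_two_pi, H.one_mem]
  have hall : ∀ φ, φ ∈ A := by
    intro φ
    have : φ ∈ closure (A : Set ℝ) := closure_mono hle (hd φ)
    rwa [hAc.closure_eq] at this
  have := subgroup_top (H.comap (MulAut.conj D).toMonoidHom) (fun φ => hall φ) (D⁻¹ * a * D)
    (by simpa [mul_assoc] using ha)
    (frob_gt _ (by
      rw [Matrix.SpecialLinearGroup.coe_mul, Matrix.trace_mul_comm,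
        ← Matrix.SpecialLinearGroup.coe_mul]
      simpa using htr)) (D⁻¹ * x * D)
  simpa [mul_assoc] using this

/-- The hyperbolic generator. -/
def genA (c σ : ℝ) (h : c ^ 2 - σ ^ 2 = 1) : Matrix.SpecialLinearGroup (Fin 2) ℝ :=
  ⟨!![c, σ; σ, c], by rw [Matrix.det_fin_two_of]; linarith⟩

/-- The generator that is elliptic for irrational `t` and parabolic for `t = 0`. -/
noncomputable def genB (t : ℝ) : Matrix.SpecialLinearGroup (Fin 2) ℝ :=
  ⟨!![Real.cos (Real.pi * t), -6; Real.sin (Real.pi * t) ^ 2 / 6, Real.cos (Real.pi * t)], by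
    rw [Matrix.det_fin_two_of]; nlinarith [Real.sin_sq_add_cos_sq (Real.pi * t)]⟩

lemma genA_coe (c σ : ℝ) (h : c ^ 2 - σ ^ 2 = 1) :
    (genA c σ h : Matrix (Fin 2) (Fin 2) ℝ) = !![c, σ; σ, c] := rfl

lemma genB_coe (t : ℝ) : (genB t : Matrix (Fin 2) (Fin 2) ℝ) =
  !![Real.cos (Real.pi * t), -6; Real.sin (Real.pi * t) ^ 2 / 6, Real.cos (Real.pi * t)] := rfl

/-- The representation. -/
noncomputable def rep (c σ : ℝ) (h : c ^ 2 - σ ^ 2 = 1) (t : ℝ) :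
    FreeGroup (Fin 2) →* Matrix.SpecialLinearGroup (Fin 2) ℝ :=
  FreeGroup.lift ![genA c σ h, genB t]

lemma continuous_genB : Continuous genB := by
  apply Continuous.subtype_mk
  refine continuous_matrix fun i j => ?_
  fin_cases i <;> fin_cases j <;> simp <;> fun_prop

lemma continuous_rep (c σ : ℝ) (h : c ^ 2 - σ ^ 2 = 1) (γ : FreeGroup (Fin 2)) :
    Continuous (fun t => rep c σ h t γ) := by
  induction γ using FreeGroup.induction_on with
  | C1 => simpa using continuous_const
  | of x =>
    fin_cases x
    · simpa [rep] using continuous_const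
    · simpa [rep] using continuous_genB
  | inv_of x ih => simp only [map_inv]; exact ih.inv
  | mul x y hx hy => simp only [map_mul]; exact hx.mul hy

/-- Ping-pong regions, by the leading letter of the word. -/
def pingSt : Option (Fin 2 × Bool) → ℝ → ℝ → Prop
  | none, _, y => y = 0
  | some (0, true), x, y => x ≤ 3 * y
  | some (0, false), x, y => x ≤ -3 * y
  | some (1, true), x, y => 0 ≤ -y ∧ -3 * y ≤ x
  | some (1, false), x, y => 0 ≤ y ∧ 3 * y ≤ x

lemma stepA (c σ K x y : ℝ) (hσ : 0 < σ) (hc : σ ≤ c) (h9 : 9 * c ≤ 10 * σ)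
    (hK : K ≤ 2 / 3 * c) (hx : 0 < x) (h1 : -x ≤ 3 * y) :
    K * x ≤ c * x + σ * y ∧ c * x + σ * y ≤ 3 * (σ * x + c * y) := by
  have a1 := mul_nonneg (sub_nonneg.2 hK) hx.le
  have a2 := mul_nonneg (sub_nonneg.2 hc) hx.le
  have a3 := mul_nonneg (sub_nonneg.2 h9) hx.le
  have a4 := mul_nonneg hσ.le (by linarith : 0 ≤ 3 * y + x)
  have a5 := mul_nonneg (sub_nonneg.2 hc) (by linarith : 0 ≤ 3 * y + x)
  have a6 := mul_pos hσ hx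
  constructor <;> nlinarith

lemma ping (c σ : ℝ) (h : c ^ 2 - σ ^ 2 = 1) (K : ℝ) (hσ : 0 < σ) (hc : σ ≤ c)
    (h9 : 9 * c ≤ 10 * σ) (hK0 : 0 < K) (hK : K ≤ 2 / 3 * c)
    (L : List (Fin 2 × Bool)) (hL : FreeGroup.IsReduced L) :
    ∃ ε : ℝ, (ε = 1 ∨ ε = -1) ∧
      K ^ (L.countP fun p => decide (p.1 = 0)) ≤ ε * (rep c σ h 0 (FreeGroup.mk L)).1 0 0 ∧
      pingSt L.head? (ε * (rep c σ h 0 (FreeGroup.mk L)).1 0 0)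
        (ε * (rep c σ h 0 (FreeGroup.mk L)).1 1 0) := by
  induction L with
  | nil =>
    refine ⟨1, Or.inl rfl, ?_, ?_⟩
    · simp [← FreeGroup.one_eq_mk]
    · simp [← FreeGroup.one_eq_mk, pingSt]
  | cons p L ih =>
    obtain ⟨ε, hε, hN, hS⟩ := ih (List.IsChain.tail hL)
    have hcons : rep c σ h 0 (FreeGroup.mk (p :: L)) =
        (cond p.2 ((![genA c σ h, genB 0] : Fin 2 → _) p.1)
          ((![genA c σ h, genB 0] : Fin 2 → _) p.1)⁻¹) * rep c σ h 0 (FreeGroup.mk L) := by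
      simp [rep, FreeGroup.lift_mk]
    rw [hcons]
    generalize rep c σ h 0 (FreeGroup.mk L) = g at *
    have hred : ∀ q ∈ L.head?, p.1 = q.1 → p.2 = q.2 := by
      intro q hq
      cases L with
      | nil => simp at hq
      | cons r L =>
        simp at hq; subst hq
        exact (FreeGroup.isReduced_cons_cons.1 hL).1
    generalize L.head? = o at *
    rw [List.countP_cons]
    generalize (L.countP fun p => decide (p.1 = 0)) = n at *
    have hn : 0 < K ^ n := pow_pos hK0 n
    have hx : 0 < ε * g.1 0 0 := lt_of_lt_of_le hn hN
    obtain ⟨i, b⟩ := p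
    -- conclusions up to sign
    suffices H : ∃ δ : ℝ, (δ = 1 ∨ δ = -1) ∧ ∀ M : Matrix.SpecialLinearGroup (Fin 2) ℝ,
        M = cond b ((![genA c σ h, genB 0] : Fin 2 → _) i)
          ((![genA c σ h, genB 0] : Fin 2 → _) i)⁻¹ →
        K ^ (n + if decide (i = 0) = true then 1 else 0) ≤
          δ * (M.1 0 0 * (ε * g.1 0 0) + M.1 0 1 * (ε * g.1 1 0)) ∧
        pingSt (some (i, b)) (δ * (M.1 0 0 * (ε * g.1 0 0) + M.1 0 1 * (ε * g.1 1 0)))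
          (δ * (M.1 1 0 * (ε * g.1 0 0) + M.1 1 1 * (ε * g.1 1 0))) by
      obtain ⟨δ, hδ, H⟩ := H
      obtain ⟨H1, H2⟩ := H _ rfl
      generalize cond b ((![genA c σ h, genB 0] : Fin 2 → _) i)
          ((![genA c σ h, genB 0] : Fin 2 → _) i)⁻¹ = M at *
      have e0 : δ * ε * (M * g).1 0 0 =
          δ * (M.1 0 0 * (ε * g.1 0 0) + M.1 0 1 * (ε * g.1 1 0)) := by
        simp only [Matrix.SpecialLinearGroup.coe_mul, Matrix.mul_apply, Fin.sum_univ_two]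
        ring
      have e1 : δ * ε * (M * g).1 1 0 =
          δ * (M.1 1 0 * (ε * g.1 0 0) + M.1 1 1 * (ε * g.1 1 0)) := by
        simp only [Matrix.SpecialLinearGroup.coe_mul, Matrix.mul_apply, Fin.sum_univ_two]
        ring
      refine ⟨δ * ε, ?_, ?_, ?_⟩
      · rcases hδ with rfl | rfl <;> rcases hε with rfl | rfl <;> norm_num
      · rw [e0]; exact H1
      · rw [e0, e1]; exact H2
    generalize ε * g.1 0 0 = x at *
    generalize ε * g.1 1 0 = y at *
    have hKn : K ^ (n + 1) ≤ K * x := by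
      rw [pow_succ, mul_comm]; exact mul_le_mul_of_nonneg_left hN hK0.le
    fin_cases i <;> cases b
    · -- inverse of the first generator
      have h1 : -x ≤ 3 * (-y) := by
        rcases o with _ | ⟨j, d⟩
        · simp only [pingSt] at hS; linarith
        · fin_cases j <;> cases d <;> simp [pingSt] at hS hred <;> linarith
      obtain ⟨r1, r2⟩ := stepA c σ K x (-y) hσ hc h9 hK hx h1
      refine ⟨1, Or.inl rfl, ?_⟩
      rintro M rfl
      simp [pingSt, genA_coe, Matrix.SpecialLinearGroup.coe_inv, Matrix.adjugate_fin_two]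
      constructor <;> linarith
    · have h1 : -x ≤ 3 * y := by
        rcases o with _ | ⟨j, d⟩
        · simp only [pingSt] at hS; linarith
        · fin_cases j <;> cases d <;> simp [pingSt] at hS hred <;> linarith
      obtain ⟨r1, r2⟩ := stepA c σ K x y hσ hc h9 hK hx h1
      refine ⟨1, Or.inl rfl, ?_⟩
      rintro M rfl
      simp [pingSt, genA_coe]
      constructor <;> linarith
    · -- x + 6 y
      by_cases hy : 0 ≤ y
      · refine ⟨1, Or.inl rfl, ?_⟩
        rintro M rfl
        simp [pingSt, genB_coe, Matrix.SpecialLinearGroup.coe_inv, Matrix.adjugate_fin_two]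
        refine ⟨?_, ?_, ?_⟩ <;> linarith
      · refine ⟨-1, Or.inr rfl, ?_⟩
        have h1 : x ≤ -3 * y := by
          rcases o with _ | ⟨j, d⟩
          · simp only [pingSt] at hS; linarith
          · fin_cases j <;> cases d <;> simp [pingSt] at hS hred <;> linarith
        rintro M rfl
        simp [pingSt, genB_coe, Matrix.SpecialLinearGroup.coe_inv, Matrix.adjugate_fin_two]
        refine ⟨?_, ?_, ?_⟩ <;> linarith
    · by_cases hy : y ≤ 0
      · refine ⟨1, Or.inl rfl, ?_⟩
        rintro M rfl
        simp [pingSt, genB_coe]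
        refine ⟨?_, ?_, ?_⟩ <;> linarith
      · refine ⟨-1, Or.inr rfl, ?_⟩
        have h1 : x ≤ 3 * y := by
          rcases o with _ | ⟨j, d⟩
          · simp only [pingSt] at hS; linarith
          · fin_cases j <;> cases d <;> simp [pingSt] at hS hred <;> linarith
        rintro M rfl
        simp [pingSt, genB_coe]
        refine ⟨?_, ?_, ?_⟩ <;> linarith

lemma entry_le_opNorm2 (M : Matrix (Fin 2) (Fin 2) ℝ) : |M 0 0| ≤ opNorm2 M := by
  have h1 := (LinearMap.toContinuousLinearMap (Matrix.toEuclideanLin M)).le_opNorm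
    (EuclideanSpace.single 0 1)
  have h2 := PiLp.norm_apply_le (LinearMap.toContinuousLinearMap (Matrix.toEuclideanLin M)
    (EuclideanSpace.single 0 1)) 0
  simp at h1 h2
  exact h2.trans h1

lemma genB_conj (t : ℝ) (ht : 0 < Real.sin (Real.pi * t)) :
    ∃ D : Matrix.SpecialLinearGroup (Fin 2) ℝ, D * kRot (Real.pi * t) * D⁻¹ = genB t := by
  set l := Real.sqrt (6 / Real.sin (Real.pi * t))
  have hl : l ^ 2 = 6 / Real.sin (Real.pi * t) := Real.sq_sqrt (by positivity)
  have hl0 : 0 < l := Real.sqrt_pos.2 (by positivity)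
  have hs : Real.sin (Real.pi * t) = 6 / l ^ 2 := by rw [hl]; field_simp
  obtain ⟨D, hD⟩ : ∃ D : Matrix.SpecialLinearGroup (Fin 2) ℝ,
      (D : Matrix (Fin 2) (Fin 2) ℝ) = !![l, 0; 0, l⁻¹] :=
    ⟨⟨!![l, 0; 0, l⁻¹], by rw [Matrix.det_fin_two_of, mul_inv_cancel₀ hl0.ne']; ring⟩, rfl⟩
  refine ⟨D, ?_⟩
  rw [mul_inv_eq_iff_eq_mul]
  apply Subtype.ext
  ext i j
  fin_cases i <;> fin_cases j <;>
    simp [kRot_coe, genB_coe, hD, Matrix.mul_apply, Fin.sum_univ_two, hs] <;> field_simp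

theorem stmt1 (κ : ℝ) (hκ : 0 < κ) :
    ∃ ρ : ℝ → (FreeGroup (Fin 2) →* Matrix.SpecialLinearGroup (Fin 2) ℝ),
      -- (1) continuity in `t` (for the matrix topology)
      (∀ γ : FreeGroup (Fin 2),
        ContinuousOn (fun t : ℝ => ((ρ t γ : Matrix (Fin 2) (Fin 2) ℝ))) (Set.Icc 0 1)) ∧
      -- (2) linear lower bound on the Cartan projection at `t = 0`
      (∀ γ : FreeGroup (Fin 2), κ * (lenA γ : ℝ) ≤ mu2 (ρ 0 γ)) ∧
      -- (3) for irrational `t`: dense image, `ρ_t(a)` hyperbolic, `ρ_t(b)` elliptic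
      (∀ t ∈ Set.Icc (0 : ℝ) 1, Irrational t →
        (∀ g : Matrix.SpecialLinearGroup (Fin 2) ℝ,
          (g : Matrix (Fin 2) (Fin 2) ℝ) ∈
            closure (Set.range fun γ : FreeGroup (Fin 2) =>
              ((ρ t γ : Matrix (Fin 2) (Fin 2) ℝ)))) ∧
        2 < |Matrix.trace ((ρ t (FreeGroup.of 0) : Matrix (Fin 2) (Fin 2) ℝ))| ∧
        |Matrix.trace ((ρ t (FreeGroup.of 1) : Matrix (Fin 2) (Fin 2) ℝ))| < 2) := by
  obtain ⟨K, hKdef⟩ : ∃ K, K = Real.exp (κ / 2) := ⟨_, rfl⟩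
  have hK0 : 0 < K := hKdef ▸ Real.exp_pos _
  obtain ⟨c, hcdef⟩ : ∃ c, c = 3 / 2 * K + 10 := ⟨_, rfl⟩
  have hc10 : 10 ≤ c := by linarith
  have hsq : Real.sqrt (c ^ 2 - 1) ^ 2 = c ^ 2 - 1 := Real.sq_sqrt (by nlinarith)
  obtain ⟨σ, hσdef⟩ : ∃ σ, σ = Real.sqrt (c ^ 2 - 1) := ⟨_, rfl⟩
  rw [← hσdef] at hsq
  have hσ : 0 < σ := by rw [hσdef]; exact Real.sqrt_pos.2 (by nlinarith)
  have h : c ^ 2 - σ ^ 2 = 1 := by linarith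
  have hc : σ ≤ c := by nlinarith
  have h9 : 9 * c ≤ 10 * σ := by
    by_contra hh; nlinarith
  have hA : ∀ t, rep c σ h t (FreeGroup.of 0) = genA c σ h := by intro t; simp [rep]
  have hB : ∀ t, rep c σ h t (FreeGroup.of 1) = genB t := by intro t; simp [rep]
  have htr : 2 < |Matrix.trace (genA c σ h).1| := by
    rw [Matrix.trace_fin_two, genA_coe]
    simp
    rw [abs_of_nonneg] <;> linarith
  refine ⟨rep c σ h, ?_, ?_, ?_⟩
  · intro γ
    exact (continuous_subtype_val.comp (continuous_rep c σ h γ)).continuousOn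
  · intro γ
    obtain ⟨ε, hε, hN, -⟩ := ping c σ h K hσ hc h9 hK0 (by linarith) γ.toWord
      FreeGroup.isReduced_toWord
    rw [FreeGroup.mk_toWord] at hN
    have h1 : K ^ lenA γ ≤ opNorm2 (rep c σ h 0 γ).1 := by
      refine hN.trans (le_trans (le_abs_self _) ?_)
      rw [abs_mul, show |ε| = 1 by rcases hε with rfl | rfl <;> simp, one_mul]
      exact entry_le_opNorm2 _
    have h2 := Real.log_le_log (pow_pos hK0 _) h1
    rw [Real.log_pow, hKdef, Real.log_exp] at h2
    unfold mu2
    linarith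
  · intro t ht hirr
    have ht0 : 0 < t := lt_of_le_of_ne ht.1 (fun e => hirr.ne_zero e.symm)
    have ht1 : t < 1 := lt_of_le_of_ne ht.2 hirr.ne_one
    have hsin : 0 < Real.sin (Real.pi * t) :=
      Real.sin_pos_of_pos_of_lt_pi (by positivity) (by nlinarith [Real.pi_pos])
    refine ⟨?_, ?_, ?_⟩
    · intro g
      obtain ⟨D, hD⟩ := genB_conj t hsin
      have hg := dense_of (rep c σ h t).range.topologicalClosure
        (Subgroup.isClosed_topologicalClosure _) D (genA c σ h)
        (Subgroup.le_topologicalClosure _ ⟨FreeGroup.of 0, hA t⟩) htr t hirr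
        (Subgroup.le_topologicalClosure _ ⟨FreeGroup.of 1, by rw [hD, hB]⟩) g
      have hg' : g ∈ closure (Set.range (rep c σ h t)) := hg
      have := image_closure_subset_closure_image
        (f := (Subtype.val : Matrix.SpecialLinearGroup (Fin 2) ℝ → Matrix (Fin 2) (Fin 2) ℝ))
        continuous_subtype_val (Set.mem_image_of_mem _ hg')
      refine closure_mono ?_ this
      rintro _ ⟨_, ⟨γ, rfl⟩, rfl⟩
      exact ⟨γ, rfl⟩
    · rw [hA]; exact htr
    · rw [hB, Matrix.trace_fin_two, genB_coe]
      have := Real.sin_sq_add_cos_sq (Real.pi * t)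
      simp
      rw [abs_lt]
      constructor <;> nlinarith
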